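/- Let n ≥ 3 and let r, s, h ∈ {1,…,n} be pairwise distinct. Then in W(n): (ad D_{rs}(x_r x_s x_h))^{p−1}(D_r) = D_{rs}(x_s·x_h^{p−1}) and (ad D_{rs}(x_r x_s x_h))^{p−1}(D_s) = −D_{rs}(x_r·x_h^{p−1}). -/

import Mathlib

/-! Write `t = x_h` and `E = x_r D_r - x_s D_s`. Then `z = D_{rs}(x_r x_s x_h) = t E`, so that
`[z, D_r] = -t D_r` and `[z, D_s] = t D_s`. Since `r, s ≠ h`, also `z(t) = 0`, so multiplication by
`t` commutes with `ad z` and the two vectors generate cyclic `F[t]`-modules on which `ad z`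
is multiplication by `-t`, respectively `t` (`iterate_ad_of_eigen`). Hence `(ad z)^{p-1}` multiplies
both by `t^{p-1}`, because `p - 1` is even. As `D_s(x_s t^{p-1}) = D_r(x_r t^{p-1}) = t^{p-1}`, while
the remaining derivatives vanish, these are the claimed elements. -/

set_option maxHeartbeats 1000000
set_option synthInstance.maxHeartbeats 400000

open scoped BigOperators
noncomputable section

variable (F : Type*) [Field F] (p n : ℕ)

/-- The ideal `(X_1^p, …, X_n^p)` of the polynomial ring. -/
def truncIdeal : Ideal (MvPolynomial (Fin n) F) :=
  Ideal.span (Set.range fun i : Fin n => MvPolynomial.X i ^ p)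

/-- The truncated polynomial algebra `A(n) = F[x_1,…,x_n]/(x_1^p,…,x_n^p)`. -/
abbrev TruncP := MvPolynomial (Fin n) F ⧸ truncIdeal F p n

/-- The monomial `x^a` in `A(n)`. -/
def xpow (a : Fin n → ℕ) : TruncP F p n :=
  Ideal.Quotient.mk _ (MvPolynomial.monomial (Finsupp.equivFunOnFinite.symm a) 1)

/-- Lift an `F`-linear map killing the truncation ideal to the quotient. -/
def liftF {N : Type*} [AddCommGroup N] [Module F N]
    (f : MvPolynomial (Fin n) F →ₗ[F] N)
    (h : (truncIdeal F p n).restrictScalars F ≤ LinearMap.ker f) :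
    TruncP F p n →ₗ[F] N :=
  (Submodule.liftQ ((truncIdeal F p n).restrictScalars F) f h) ∘ₗ
    (Submodule.Quotient.restrictScalarsEquiv F (truncIdeal F p n)).symm.toLinearMap

lemma liftF_mk {N : Type*} [AddCommGroup N] [Module F N]
    (f : MvPolynomial (Fin n) F →ₗ[F] N)
    (h : (truncIdeal F p n).restrictScalars F ≤ LinearMap.ker f)
    (x : MvPolynomial (Fin n) F) :
    liftF F p n f h (Ideal.Quotient.mk _ x) = f x := by
  simp only [liftF, LinearMap.coe_comp, Function.comp_apply, LinearEquiv.coe_coe]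
  have : (Ideal.Quotient.mk (truncIdeal F p n)) x = Submodule.Quotient.mk x := rfl
  rw [this, Submodule.Quotient.restrictScalarsEquiv_symm_mk, Submodule.liftQ_apply]

lemma truncIdeal_pderiv_mem [CharP F p] (j : Fin n) {f : MvPolynomial (Fin n) F}
    (hf : f ∈ truncIdeal F p n) :
    Ideal.Quotient.mk (truncIdeal F p n) (MvPolynomial.pderiv j f) = 0 := by
  classical
  let K : Ideal (MvPolynomial (Fin n) F) :=
    { carrier := {g | Ideal.Quotient.mk (truncIdeal F p n) (MvPolynomial.pderiv j g) = 0 ∧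
        Ideal.Quotient.mk (truncIdeal F p n) g = 0},
      add_mem' := by
        rintro a b ⟨ha1, ha2⟩ ⟨hb1, hb2⟩
        refine ⟨?_, ?_⟩
        · rw [map_add, map_add, ha1, hb1, add_zero]
        · rw [map_add, ha2, hb2, add_zero]
      zero_mem' := ⟨by rw [map_zero, map_zero], by rw [map_zero]⟩
      smul_mem' := by
        rintro c x ⟨hx1, hx2⟩
        refine ⟨?_, ?_⟩
        · have hL : MvPolynomial.pderiv j (c * x)
              = c * MvPolynomial.pderiv j x + x * MvPolynomial.pderiv j c := by
            have := (MvPolynomial.pderiv j).leibniz c x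
            simpa [smul_eq_mul, mul_comm] using this
          rw [smul_eq_mul, hL]
          rw [map_add, map_mul, map_mul, hx1, hx2, mul_zero, zero_mul, add_zero]
        · rw [smul_eq_mul, map_mul, hx2, mul_zero] }
  have hle : truncIdeal F p n ≤ K := by
    rw [truncIdeal, Ideal.span_le]
    rintro _ ⟨i, rfl⟩
    refine ⟨?_, ?_⟩
    · have hgen : MvPolynomial.pderiv j (MvPolynomial.X (R := F) i ^ p) = 0 := by
        rw [MvPolynomial.X_pow_eq_monomial, MvPolynomial.pderiv_monomial]
        rcases eq_or_ne i j with h | h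
        · subst h
          simp [Finsupp.single_apply, CharP.cast_eq_zero F p]
        · simp [Finsupp.single_apply, h]
      rw [hgen, map_zero]
    · exact Ideal.Quotient.eq_zero_iff_mem.mpr (Ideal.subset_span ⟨i, rfl⟩)
  exact (hle hf).1

lemma truncIdeal_support {f : MvPolynomial (Fin n) F} (hf : f ∈ truncIdeal F p n) :
    ∀ d ∈ f.support, ∃ i, p ≤ d i := by
  classical
  let K : Ideal (MvPolynomial (Fin n) F) :=
    { carrier := {g | ∀ d ∈ g.support, ∃ i, p ≤ d i},
      add_mem' := by
        intro a b ha hb d hd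
        rcases Finset.mem_union.mp (MvPolynomial.support_add hd) with h | h
        · exact ha d h
        · exact hb d h
      zero_mem' := by simp
      smul_mem' := by
        intro c x hx d hd
        rw [smul_eq_mul] at hd
        obtain ⟨d1, hd1, d2, hd2, rfl⟩ := Finset.mem_add.mp (MvPolynomial.support_mul c x hd)
        obtain ⟨i, hi⟩ := hx d2 hd2
        exact ⟨i, le_trans hi (by simp)⟩ }
  have hle : truncIdeal F p n ≤ K := by
    rw [truncIdeal, Ideal.span_le]
    rintro _ ⟨i, rfl⟩ d hd
    simp only [MvPolynomial.X_pow_eq_monomial] at hd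
    rw [MvPolynomial.support_monomial] at hd
    simp only [one_ne_zero, if_false] at hd
    rcases Finset.mem_singleton.mp hd with rfl
    exact ⟨i, by simp⟩
  exact hle hf

/-- The coefficient of `x^a` (for `a` componentwise `< p`) of an element of `A(n)`,
as a linear functional. For `a` not in the box this is defined to be `0`. -/
def coeffT (a : Fin n → ℕ) : TruncP F p n →ₗ[F] F :=
  if h : ∀ i, a i < p then
    liftF F p n
      { toFun := fun f => f.coeff (Finsupp.equivFunOnFinite.symm a),
        map_add' := fun f g => MvPolynomial.coeff_add _ f g,
        map_smul' := fun c f => MvPolynomial.coeff_smul _ c f }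
      (by
        intro f hf
        have hf' : f ∈ truncIdeal F p n := hf
        simp only [LinearMap.mem_ker, LinearMap.coe_mk, AddHom.coe_mk]
        by_contra hne
        have hmem : Finsupp.equivFunOnFinite.symm a ∈ f.support :=
          MvPolynomial.mem_support_iff.mpr hne
        obtain ⟨i, hi⟩ := truncIdeal_support F p n hf' _ hmem
        have heq : (Finsupp.equivFunOnFinite.symm a) i = a i := rfl
        have h2 := h i
        rw [heq] at hi
        omega)
  else 0

/-- The Jacobson–Witt algebra `W(n) = Der_F A(n)`. -/
abbrev Witt := Derivation F (TruncP F p n) (TruncP F p n)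

def DjL [CharP F p] (j : Fin n) : TruncP F p n →ₗ[F] TruncP F p n :=
  liftF F p n
    ((Ideal.Quotient.mkₐ F (truncIdeal F p n)).toLinearMap ∘ₗ (MvPolynomial.pderiv j).toLinearMap)
    (by
      intro f hf
      have hf' : f ∈ truncIdeal F p n := hf
      simp only [LinearMap.mem_ker, LinearMap.coe_comp, Function.comp_apply,
        AlgHom.toLinearMap_apply, Ideal.Quotient.mkₐ_eq_mk, Derivation.coeFn_coe]
      exact truncIdeal_pderiv_mem F p n j hf')

lemma DjL_mk [CharP F p] (j : Fin n) (f : MvPolynomial (Fin n) F) :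
    DjL F p n j (Ideal.Quotient.mk _ f) = Ideal.Quotient.mk _ (MvPolynomial.pderiv j f) := by
  rw [DjL, liftF_mk]
  simp

/-- The partial derivative `D_j = ∂/∂x_j`, as a derivation of `A(n)`. -/
def Dj [CharP F p] (j : Fin n) : Witt F p n where
  toLinearMap := DjL F p n j
  map_one_eq_zero' := by
    have h1 : (1 : TruncP F p n) = Ideal.Quotient.mk _ (1 : MvPolynomial (Fin n) F) :=
      (map_one _).symm
    rw [LinearMap.coe_mk] at *
    show DjL F p n j 1 = 0
    rw [h1, DjL_mk]
    simp
  leibniz' := by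
    intro a b
    obtain ⟨x, rfl⟩ := Ideal.Quotient.mk_surjective a
    obtain ⟨y, rfl⟩ := Ideal.Quotient.mk_surjective b
    show DjL F p n j _ = _ • DjL F p n j _ + _ • DjL F p n j _
    rw [← map_mul, DjL_mk, DjL_mk, DjL_mk, smul_eq_mul, smul_eq_mul, ← map_mul, ← map_mul,
      ← map_add]
    congr 1
    have := (MvPolynomial.pderiv j).leibniz x y
    simpa [smul_eq_mul] using this
section Cochains

variable (F : Type*) [Field F] {L : Type*} [AddCommGroup L] [Module F L]

/-- A map of two arguments which is `F`-linear in each argument. -/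
def IsBilinear (ψ : L → L → L) : Prop :=
  (∀ x, IsLinearMap F (ψ x)) ∧ ∀ y, IsLinearMap F fun x => ψ x y

/-- A 2-cochain with adjoint coefficients: an alternating `F`-bilinear map. -/
def IsCochain (ψ : L → L → L) : Prop :=
  IsBilinear F ψ ∧ ∀ x, ψ x x = 0

/-- A 2-cocycle with adjoint coefficients, for the bracket `B`. -/
def IsCocycle (B : L → L → L) (ψ : L → L → L) : Prop :=
  IsCochain F ψ ∧ ∀ x y z,
    B x (ψ y z) - B y (ψ x z) + B z (ψ x y)
      - ψ (B x y) z + ψ (B x z) y - ψ (B y z) x = 0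

/-- A 2-coboundary with adjoint coefficients, for the bracket `B`. -/
def IsCoboundary (B : L → L → L) (ψ : L → L → L) : Prop :=
  ∃ φ : L →ₗ[F] L, ∀ x y, ψ x y = B x (φ y) - B y (φ x) - φ (B x y)

/-- A 2-cocycle of a subspace `V` (closed under the bracket `B` of the ambient space),
with adjoint coefficients.  The cochain is recorded as an everywhere-defined bilinear
map preserving `V`; only its restriction to `V` is relevant. -/
def IsCocycleOn (V : Submodule F L) (B : L → L → L) (ψ : L → L → L) : Prop :=
  IsBilinear F ψ ∧ (∀ x ∈ V, ∀ y ∈ V, ψ x y ∈ V) ∧ (∀ x ∈ V, ψ x x = 0) ∧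
    ∀ x ∈ V, ∀ y ∈ V, ∀ z ∈ V,
      B x (ψ y z) - B y (ψ x z) + B z (ψ x y)
        - ψ (B x y) z + ψ (B x z) y - ψ (B y z) x = 0

/-- A 2-coboundary of a subspace `V`, with adjoint coefficients. -/
def IsCoboundaryOn (V : Submodule F L) (B : L → L → L) (ψ : L → L → L) : Prop :=
  ∃ φ : L →ₗ[F] L, (∀ x ∈ V, φ x ∈ V) ∧
    ∀ x ∈ V, ∀ y ∈ V, ψ x y = B x (φ y) - B y (φ x) - φ (B x y)

/-- A derivation of a subspace `V` closed under the bracket `B`: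
an `F`-linear map preserving `V` and satisfying the Leibniz rule on `V`. -/
def IsDerivationOn (V : Submodule F L) (B : L → L → L) (γ : L →ₗ[F] L) : Prop :=
  (∀ x ∈ V, γ x ∈ V) ∧ ∀ x ∈ V, ∀ y ∈ V, γ (B x y) = B (γ x) y + B x (γ y)

/-- An inner derivation of a subspace `V`: a map agreeing on `V` with `ad z = B z ·`
for some `z ∈ V`. -/
def IsInnerOn (V : Submodule F L) (B : L → L → L) (δ : L → L) : Prop :=
  ∃ z ∈ V, ∀ y ∈ V, δ y = B z y

/-- An inner derivation: `δ = ad z = B z ·` for some `z`. -/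
def IsInner (B : L → L → L) (δ : L → L) : Prop := ∃ z, ∀ y, δ y = B z y

/-- The squaring `Sq(γ)(x,y) = ∑_{i=1}^{p-1} [γ^i(x), γ^{p-i}(y)]/(i!·(p-i)!)`
of an operator `γ`, relative to the bracket `B`. -/
def Squaring (p : ℕ) (B : L → L → L) (γ : L → L) : L → L → L := fun x y =>
  ∑ i ∈ Finset.Ioo 0 p,
    (((Nat.factorial i * Nat.factorial (p - i) : ℕ) : F))⁻¹ • B (γ^[i] x) (γ^[p - i] y)

/-- `Sq(z) := Sq(ad z)` for an element `z`. -/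
def SqE (p : ℕ) (B : L → L → L) (z : L) : L → L → L :=
  Squaring F p B (fun y => B z y)

/-- The Hochschild operator
`H_ψ(x)(y) = ∑_{j=0}^{p-1} (ad x)^j (ψ(x, (ad x)^{p-1-j}(y))) − ψ(x^{[p]}, y)`,
for the bracket `B`, the 2-cochain `ψ`, and the chosen `p`-th power `xp` of `x`. -/
def HOp (p : ℕ) (B : L → L → L) (ψ : L → L → L) (x xp : L) : L → L := fun y =>
  (∑ j ∈ Finset.range p, (fun z => B x z)^[j] (ψ x ((fun z => B x z)^[p - 1 - j] y)))
    - ψ xp y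

end Cochains

section Special

variable (F : Type*) [Field F] (p n : ℕ) [CharP F p]

/-- The element `x^a D_j` of `W(n)`. -/
def xD (a : Fin n → ℕ) (j : Fin n) : Witt F p n := xpow F p n a • Dj F p n j

/-- `D_{ij}(f) = D_j(f)·D_i − D_i(f)·D_j ∈ W(n)`. -/
def Dij (i j : Fin n) (f : TruncP F p n) : Witt F p n :=
  Dj F p n j f • Dj F p n i - Dj F p n i f • Dj F p n j

/-- The divergence `div(∑ f_i D_i) = ∑ D_i(f_i)`, i.e. `div(E) = ∑ D_i(E(x_i))`. -/
def divW (E : Witt F p n) : TruncP F p n :=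
  ∑ i, Dj F p n i (E (xpow F p n (Pi.single i 1)))

/-- The special algebra `S(n) = [S'(n), S'(n)]`, the derived subalgebra of
`S'(n) = ker(div)`, as a subspace of `W(n)`. -/
def Ssub : Submodule F (Witt F p n) :=
  Submodule.span F
    {z | ∃ D E : Witt F p n, divW F p n D = 0 ∧ divW F p n E = 0 ∧ z = ⁅D, E⁆}

/-- The multi-index `τ = (p−1, …, p−1)`. -/
def tauE : Fin n → ℕ := fun _ => p - 1

/-- The coefficient of the basis element `x^a D_i` of `W(n)` in `E ∈ W(n)`;
it equals the coefficient of `x^a` in `E(x_i)`. -/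
def coeffW (a : Fin n → ℕ) (i : Fin n) (E : Witt F p n) : F :=
  coeffT F p n a (E (xpow F p n (Pi.single i 1)))

/-- The degree-`d` homogeneous component of `W(n)`, spanned by the `x^a D_j`
with `|a| − 1 = d`. -/
def Wgr (d : ℤ) : Submodule F (Witt F p n) :=
  Submodule.span F
    {E | ∃ (a : Fin n → ℕ) (j : Fin n),
      (∀ i, a i < p) ∧ (∑ i, (a i : ℤ)) - 1 = d ∧ E = xD F p n a j}

end Special

/-- If `[z, D] = u D` with a scalar `u` annihilated by the derivation `z`, then `ad z` acts on the
`R[u]`-span of `D` as multiplication by `u`, because `[z, u^k D] = z(u^k) D + u^k [z, D]`. -/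
lemma iterate_ad_of_eigen {R A : Type*} [CommRing R] [CommRing A] [Algebra R A]
    (z D : Derivation R A A) (u : A) (hu : z u = 0) (hD : ⁅z, D⁆ = u • D) (k : ℕ) :
    (fun y => ⁅z, y⁆)^[k] D = u ^ k • D := by
  induction k with
  | zero => simp
  | succ k ih =>
    rw [Function.iterate_succ_apply', ih]
    ext f
    have hf : z (D f) - D (z f) = u * D f := by
      simpa [Derivation.commutator_apply] using congrArg (fun d : Derivation R A A => d f) hD
    have hk : z (u ^ k) = 0 := by rw [Derivation.leibniz_pow, hu]; simp
    simp only [Derivation.commutator_apply, Derivation.smul_apply, smul_eq_mul,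
      Derivation.leibniz, hk]
    linear_combination u ^ k * hf

section Coordinates

variable {F} {p n}

lemma xpow_add (a b : Fin n → ℕ) : xpow F p n (a + b) = xpow F p n a * xpow F p n b := by
  have h : Finsupp.equivFunOnFinite.symm (a + b)
      = Finsupp.equivFunOnFinite.symm a + Finsupp.equivFunOnFinite.symm b := by
    ext i; rfl
  rw [xpow, xpow, xpow, ← map_mul, MvPolynomial.monomial_mul, h, one_mul]

lemma xpow_single (i : Fin n) (k : ℕ) :
    xpow F p n (Pi.single i k) = xpow F p n (Pi.single i 1) ^ k := by
  induction k with
  | zero =>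
    have h : Finsupp.equivFunOnFinite.symm (0 : Fin n → ℕ) = 0 := by ext i; rfl
    rw [Pi.single_zero, pow_zero, xpow, h]
    exact map_one _
  | succ k ih => rw [Pi.single_add, xpow_add, ih, pow_succ]

variable [CharP F p]

lemma Dj_xpow_single (i j : Fin n) :
    Dj F p n i (xpow F p n (Pi.single j 1)) = if i = j then 1 else 0 := by
  have h : Finsupp.equivFunOnFinite.symm (Pi.single j 1 : Fin n → ℕ) = Finsupp.single j 1 := by
    simp
  change DjL F p n i _ = _
  rw [xpow, DjL_mk, h,
    show MvPolynomial.monomial (Finsupp.single j 1) (1 : F) = MvPolynomial.X j from rfl,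
    MvPolynomial.pderiv_X]
  by_cases hij : i = j
  · subst hij; simp
  · simp [hij]

lemma Dj_comm (i j : Fin n) (f : TruncP F p n) :
    Dj F p n i (Dj F p n j f) = Dj F p n j (Dj F p n i f) := by
  obtain ⟨x, rfl⟩ := Ideal.Quotient.mk_surjective f
  change DjL F p n i (DjL F p n j _) = DjL F p n j (DjL F p n i _)
  simp only [DjL_mk]
  congr 1
  have h : ⁅MvPolynomial.pderiv (R := F) i, MvPolynomial.pderiv (R := F) j⁆ = 0 := by
    apply MvPolynomial.derivation_ext
    intro k
    simp only [Derivation.commutator_apply, MvPolynomial.pderiv_X, Pi.single_apply]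
    split_ifs <;> simp
  have h' := congrArg (fun d => d x) h
  simpa [Derivation.commutator_apply, sub_eq_zero] using h'

/-- The derivation `D_{rs}(x_r x_s x_h) = x_h (x_r D_r - x_s D_s)`. -/
lemma Dij_cubic {r s h : Fin n} (hrs : r ≠ s) (hrh : r ≠ h) (hsh : s ≠ h) :
    Dij F p n r s (xpow F p n (Pi.single r 1 + Pi.single s 1 + Pi.single h 1))
      = xpow F p n (Pi.single h 1) • (xpow F p n (Pi.single r 1) • Dj F p n r
          - xpow F p n (Pi.single s 1) • Dj F p n s) := by
  ext f
  simp only [Dij, xpow_add, Derivation.leibniz, Dj_xpow_single, hrs, hrs.symm, hrh, hsh,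
    Derivation.sub_apply, Derivation.smul_apply, smul_eq_mul, if_true, if_false]
  ring

end Coordinates


/-- For pairwise distinct `r, s, h`:
`(ad D_{rs}(x_r x_s x_h))^{p−1}(D_r) = D_{rs}(x_s x_h^{p−1})` and
`(ad D_{rs}(x_r x_s x_h))^{p−1}(D_s) = −D_{rs}(x_r x_h^{p−1})` in `W(n)`. -/
theorem special_ad_iterate_formula
    (p n : ℕ) (hp : p.Prime) (hp5 : 5 ≤ p)
    (F : Type*) [Field F] [IsAlgClosed F] [CharP F p]
    (r s h : Fin n) (hrs : r ≠ s) (hrh : r ≠ h) (hsh : s ≠ h) :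
    (fun y => ⁅Dij F p n r s
        (xpow F p n (Pi.single r 1 + Pi.single s 1 + Pi.single h 1)), y⁆)^[p - 1]
        (Dj F p n r)
      = Dij F p n r s (xpow F p n (Pi.single s 1 + Pi.single h (p - 1)))
    ∧ (fun y => ⁅Dij F p n r s
        (xpow F p n (Pi.single r 1 + Pi.single s 1 + Pi.single h 1)), y⁆)^[p - 1]
        (Dj F p n s)
      = -Dij F p n r s (xpow F p n (Pi.single r 1 + Pi.single h (p - 1))) := by
  have hodd : Odd p := hp.odd_of_ne_two (by omega)
  have heven : Even (p - 1) := by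
    obtain ⟨m, hm⟩ := hodd
    exact ⟨m, by omega⟩
  rw [Dij_cubic hrs hrh hsh]
  set t := xpow F p n (Pi.single h 1) with ht
  set z := t • (xpow F p n (Pi.single r 1) • Dj F p n r
    - xpow F p n (Pi.single s 1) • Dj F p n s) with hz
  have hrt : Dj F p n r t = 0 := by rw [ht, Dj_xpow_single, if_neg hrh]
  have hst : Dj F p n s t = 0 := by rw [ht, Dj_xpow_single, if_neg hsh]
  have hzt : z t = 0 := by simp [hz, hrt, hst]
  have hzr : ⁅z, Dj F p n r⁆ = (-t) • Dj F p n r := by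
    ext f
    simp only [hz, Derivation.commutator_apply, Derivation.sub_apply, Derivation.smul_apply,
      smul_eq_mul, Derivation.leibniz, map_sub, Dj_xpow_single, hrt, hrs, if_true, if_false,
      Dj_comm s r f]
    ring
  have hzs : ⁅z, Dj F p n s⁆ = t • Dj F p n s := by
    ext f
    simp only [hz, Derivation.commutator_apply, Derivation.sub_apply, Derivation.smul_apply,
      smul_eq_mul, Derivation.leibniz, map_sub, Dj_xpow_single, hst, hrs.symm, if_true, if_false,
      Dj_comm s r f]
    ring
  have hrk : Dj F p n r (t ^ (p - 1)) = 0 := by rw [Derivation.leibniz_pow, hrt]; simp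
  have hsk : Dj F p n s (t ^ (p - 1)) = 0 := by rw [Derivation.leibniz_pow, hst]; simp
  have hneg : (-t) ^ (p - 1) = t ^ (p - 1) := heven.neg_pow t
  constructor
  · rw [iterate_ad_of_eigen z _ (-t) (by rw [map_neg, hzt, neg_zero]) hzr, hneg,
      xpow_add, xpow_single h (p - 1), ← ht]
    ext f
    simp [Dij, Dj_xpow_single, hrk, hsk, hrs]
  · rw [iterate_ad_of_eigen z _ t hzt hzs, xpow_add, xpow_single h (p - 1), ← ht]
    ext f
    simp [Dij, Dj_xpow_single, hrk, hsk, hrs.symm]
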